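/- Let 0 < σ̲ ≤ σ̄ and let S ∈ ℝ^{d×d} be a symmetric matrix, partitioned into blocks, satisfying σ̲ I_d ⪯ S ⪯ σ̄ I_d. Then the gradient matrix D(G⋆) with G⋆ = S_xy S_yy^{-1} satisfies ‖D(G⋆)‖ = 1 + ‖S_yy^{-1} S_yx S_xy S_yy^{-1}‖ ≤ σ̄²/σ̲², where ‖·‖ denotes the spectral norm. -/

import Mathlib

open Matrix

/-- The objective `f(S) = Tr(S_xx − S_xy S_yy⁻¹ S_yx)` of the convex reformulation. -/
noncomputable def fobj {n m : ℕ} (S : Matrix (Fin n ⊕ Fin m) (Fin n ⊕ Fin m) ℝ) : ℝ :=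
  (S.toBlocks₁₁ - S.toBlocks₁₂ * S.toBlocks₂₂⁻¹ * S.toBlocks₂₁).trace

/-- The gradient matrix `D(G) = [I, −G]ᵀ[I, −G] = [[I, −G], [−Gᵀ, GᵀG]]`. -/
def Dmat {n m : ℕ} (G : Matrix (Fin n) (Fin m) ℝ) :
    Matrix (Fin n ⊕ Fin m) (Fin n ⊕ Fin m) ℝ :=
  Matrix.fromBlocks 1 (-G) (-Gᵀ) (Gᵀ * G)


/-- The spectral norm of a real square matrix, i.e. the operator norm of the induced
linear map on Euclidean space. -/
noncomputable def specNorm {ι : Type*} [Fintype ι] [DecidableEq ι] (A : Matrix ι ι ℝ) : ℝ :=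
  ‖Matrix.toEuclideanCLM (𝕜 := ℝ) A‖

theorem dot_toLp {ι : Type*} [Fintype ι] (v : ι → ℝ) :
    v ⬝ᵥ v = ‖WithLp.toLp 2 v‖ ^ 2 := by
  rw [EuclideanSpace.norm_sq_eq]; simp [dotProduct, sq]

open scoped Matrix.Norms.L2Operator in
theorem l2_bound {ι κ : Type*} [Fintype ι] [Fintype κ] [DecidableEq ι] [DecidableEq κ]
    (A : Matrix ι κ ℝ) (v : κ → ℝ) :
    (A *ᵥ v) ⬝ᵥ (A *ᵥ v) ≤ ‖A‖ ^ 2 * (v ⬝ᵥ v) := by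
  have h := Matrix.l2_opNorm_mulVec A (WithLp.toLp 2 v)
  have h2 := pow_le_pow_left₀ (norm_nonneg _) h 2
  rw [mul_pow] at h2
  rw [dot_toLp, dot_toLp]
  simpa using h2

open scoped Matrix.Norms.L2Operator in
theorem l2_le {ι κ : Type*} [Fintype ι] [Fintype κ] [DecidableEq ι] [DecidableEq κ]
    (A : Matrix ι κ ℝ) (c : ℝ) (hc : 0 ≤ c)
    (h : ∀ v, (A *ᵥ v) ⬝ᵥ (A *ᵥ v) ≤ c * (v ⬝ᵥ v)) : ‖A‖ ^ 2 ≤ c := by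
  have : ‖A‖ ≤ √c := by
    rw [Matrix.l2_opNorm_def]
    refine ContinuousLinearMap.opNorm_le_bound _ (Real.sqrt_nonneg _) fun x => ?_
    have := h x.ofLp
    rw [dot_toLp, dot_toLp] at this
    refine le_of_sq_le_sq ?_ (by positivity)
    rw [mul_pow, Real.sq_sqrt hc]
    exact this
  calc ‖A‖ ^ 2 ≤ √c ^ 2 := by gcongr
    _ = c := Real.sq_sqrt hc

open scoped Matrix.Norms.L2Operator in
theorem specNorm_eq {ι : Type*} [Fintype ι] [DecidableEq ι] (A : Matrix ι ι ℝ) :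
    specNorm A = ‖A‖ := by
  rw [specNorm, Matrix.cstar_norm_def]

open scoped Matrix.Norms.L2Operator in
theorem specNorm_tr {ι κ : Type*} [Fintype ι] [Fintype κ] [DecidableEq ι] [DecidableEq κ]
    (A : Matrix ι κ ℝ) : specNorm (Aᵀ * A) = ‖A‖ ^ 2 := by
  rw [specNorm_eq, ← Matrix.conjTranspose_eq_transpose_of_trivial,
    Matrix.l2_opNorm_conjTranspose_mul_self, sq]

open scoped Matrix.Norms.L2Operator in
theorem norm_tr {ι κ : Type*} [Fintype ι] [Fintype κ] [DecidableEq ι] [DecidableEq κ]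
    (A : Matrix ι κ ℝ) : ‖Aᵀ‖ = ‖A‖ := by
  rw [← Matrix.conjTranspose_eq_transpose_of_trivial, Matrix.l2_opNorm_conjTranspose]

open scoped Matrix.Norms.L2Operator in
theorem specNorm_Dmat {n m : ℕ} [NeZero n] (G : Matrix (Fin n) (Fin m) ℝ) :
    specNorm (Dmat G) = 1 + ‖G‖ ^ 2 := by
  have hD : Dmat G = (Matrix.fromCols (1 : Matrix (Fin n) (Fin n) ℝ) (-G))ᵀ * Matrix.fromCols (1 : Matrix (Fin n) (Fin n) ℝ) (-G) := by
    rw [Matrix.transpose_fromCols, Matrix.fromRows_mul_fromCols]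
    simp [Dmat]
  rw [hD, specNorm_tr, ← norm_tr, ← norm_tr G]
  have key : ∀ v, ((Matrix.fromCols (1 : Matrix (Fin n) (Fin n) ℝ) (-G))ᵀ *ᵥ v) ⬝ᵥ ((Matrix.fromCols (1 : Matrix (Fin n) (Fin n) ℝ) (-G))ᵀ *ᵥ v)
      = v ⬝ᵥ v + (Gᵀ *ᵥ v) ⬝ᵥ (Gᵀ *ᵥ v) := by
    intro v
    rw [Matrix.transpose_fromCols, Matrix.fromRows_mulVec, sumElim_dotProduct_sumElim]
    simp [Matrix.neg_mulVec]
  apply le_antisymm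
  · apply l2_le _ _ (by positivity)
    intro v
    rw [key]
    linarith [l2_bound Gᵀ v]
  · have hb := fun v => l2_bound (Matrix.fromCols (1 : Matrix (Fin n) (Fin n) ℝ) (-G))ᵀ v
    have : ‖Gᵀ‖ ^ 2 ≤ ‖(Matrix.fromCols (1 : Matrix (Fin n) (Fin n) ℝ) (-G))ᵀ‖ ^ 2 - 1 := by
      apply l2_le
      · have h1 := hb (Pi.single 0 1)
        rw [key] at h1
        have h2 : (Pi.single 0 1 : Fin n → ℝ) ⬝ᵥ Pi.single 0 1 = 1 := by simp
        have h3 : 0 ≤ (Gᵀ *ᵥ Pi.single 0 1) ⬝ᵥ (Gᵀ *ᵥ (Pi.single 0 1 : Fin n → ℝ)) := by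
          rw [dot_toLp]; positivity
        rw [h2] at h1
        linarith
      · intro v
        have := hb v
        rw [key] at this
        linarith
    linarith

theorem quad_lo {ι : Type*} [Fintype ι] [DecidableEq ι] (S : Matrix ι ι ℝ) (c : ℝ)
    (h : (S - c • (1 : Matrix ι ι ℝ)).PosSemidef) (v : ι → ℝ) :
    c * (v ⬝ᵥ v) ≤ v ⬝ᵥ (S *ᵥ v) := by
  have := h.dotProduct_mulVec_nonneg v
  simp [Matrix.sub_mulVec, Matrix.smul_mulVec, dotProduct_sub] at this
  exact this

theorem quad_hi {ι : Type*} [Fintype ι] [DecidableEq ι] (S : Matrix ι ι ℝ) (c : ℝ)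
    (h : (c • (1 : Matrix ι ι ℝ) - S).PosSemidef) (v : ι → ℝ) :
    v ⬝ᵥ (S *ᵥ v) ≤ c * (v ⬝ᵥ v) := by
  have := h.dotProduct_mulVec_nonneg v
  simp [Matrix.sub_mulVec, Matrix.smul_mulVec, dotProduct_sub] at this
  exact this

theorem dot_nn {ι : Type*} [Fintype ι] (v : ι → ℝ) : 0 ≤ v ⬝ᵥ v := by
  rw [dot_toLp]; positivity

theorem S_bound {ι : Type*} [Fintype ι] [DecidableEq ι] (S : Matrix ι ι ℝ) (c : ℝ) (hc : 0 < c)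
    (hs : S.IsSymm) (h0 : ∀ v, 0 ≤ v ⬝ᵥ (S *ᵥ v)) (h1 : ∀ v, v ⬝ᵥ (S *ᵥ v) ≤ c * (v ⬝ᵥ v))
    (v : ι → ℝ) : (S *ᵥ v) ⬝ᵥ (S *ᵥ v) ≤ c ^ 2 * (v ⬝ᵥ v) := by
  have a := h0 (c • v - S *ᵥ v)
  have b := h1 (S *ᵥ v)
  have e := h1 v
  have f : v ⬝ᵥ (S *ᵥ (S *ᵥ v)) = (S *ᵥ v) ⬝ᵥ (S *ᵥ v) := by
    rw [Matrix.dotProduct_mulVec, ← Matrix.mulVec_transpose, hs.eq]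
  simp only [Matrix.mulVec_sub, Matrix.mulVec_smul, dotProduct_sub, sub_dotProduct,
    smul_dotProduct, dotProduct_smul, smul_eq_mul, f] at a
  have : c * ((S *ᵥ v) ⬝ᵥ (S *ᵥ v)) ≤ c * (c * (v ⬝ᵥ (S *ᵥ v))) := by nlinarith
  have := le_of_mul_le_mul_left this hc
  nlinarith

theorem stmt15 {n m : ℕ} [NeZero n] [NeZero m] (σl σu : ℝ) (hσl : 0 < σl) (hσ : σl ≤ σu)
    (S : Matrix (Fin n ⊕ Fin m) (Fin n ⊕ Fin m) ℝ) (hsym : S.IsSymm)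
    (hlo : (S - σl • (1 : Matrix (Fin n ⊕ Fin m) (Fin n ⊕ Fin m) ℝ)).PosSemidef)
    (hhi : (σu • (1 : Matrix (Fin n ⊕ Fin m) (Fin n ⊕ Fin m) ℝ) - S).PosSemidef) :
    specNorm (Dmat (S.toBlocks₁₂ * S.toBlocks₂₂⁻¹)) =
        1 + specNorm (S.toBlocks₂₂⁻¹ * S.toBlocks₂₁ * S.toBlocks₁₂ * S.toBlocks₂₂⁻¹) ∧
      specNorm (Dmat (S.toBlocks₁₂ * S.toBlocks₂₂⁻¹)) ≤ σu ^ 2 / σl ^ 2 := by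
  have h21 : S.toBlocks₂₁ = S.toBlocks₁₂ᵀ := by
    ext i j; exact hsym.apply _ _
  have h22 : S.toBlocks₂₂ᵀ = S.toBlocks₂₂ := by
    ext i j; exact hsym.apply _ _
  have hG : S.toBlocks₂₂⁻¹ * S.toBlocks₂₁ * S.toBlocks₁₂ * S.toBlocks₂₂⁻¹ =
      (S.toBlocks₁₂ * S.toBlocks₂₂⁻¹)ᵀ * (S.toBlocks₁₂ * S.toBlocks₂₂⁻¹) := by
    rw [Matrix.transpose_mul, Matrix.transpose_nonsing_inv, h22, h21]
    simp only [Matrix.mul_assoc]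
  rw [hG, specNorm_tr, specNorm_Dmat]
  refine ⟨rfl, ?_⟩
  have hu : 0 < σu := hσl.trans_le hσ
  have ql := quad_lo S σl hlo
  have qh := quad_hi S σu hhi
  have hSv : ∀ z : Fin m → ℝ, S *ᵥ (Sum.elim 0 z) =
      Sum.elim (S.toBlocks₁₂ *ᵥ z) (S.toBlocks₂₂ *ᵥ z) := by
    intro z
    conv_lhs => rw [← Matrix.fromBlocks_toBlocks S]
    rw [Matrix.fromBlocks_mulVec]
    simp
  have q2 : ∀ z : Fin m → ℝ, σl * (z ⬝ᵥ z) ≤ z ⬝ᵥ (S.toBlocks₂₂ *ᵥ z) := by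
    intro z
    have := ql (Sum.elim 0 z)
    rw [hSv] at this
    simpa [sumElim_dotProduct_sumElim] using this
  have hunit : IsUnit S.toBlocks₂₂ := by
    rw [← Matrix.mulVec_injective_iff_isUnit]
    intro x y hxy
    have h0 : S.toBlocks₂₂ *ᵥ (x - y) = 0 := by
      rw [Matrix.mulVec_sub]; exact sub_eq_zero.2 hxy
    have := q2 (x - y)
    rw [h0, dotProduct_zero] at this
    have h1 : (x - y) ⬝ᵥ (x - y) = 0 := by
      have := dot_nn (x - y)
      nlinarith
    exact sub_eq_zero.1 (dotProduct_self_eq_zero.1 h1)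
  have hdet := (Matrix.isUnit_iff_isUnit_det _).1 hunit
  have main : ∀ y : Fin m → ℝ,
      ((S.toBlocks₁₂ * S.toBlocks₂₂⁻¹) *ᵥ y) ⬝ᵥ ((S.toBlocks₁₂ * S.toBlocks₂₂⁻¹) *ᵥ y) ≤
        (σu ^ 2 / σl ^ 2 - 1) * (y ⬝ᵥ y) := by
    intro y
    obtain ⟨z, hz⟩ : ∃ z, z = S.toBlocks₂₂⁻¹ *ᵥ y := ⟨_, rfl⟩
    have hy : S.toBlocks₂₂ *ᵥ z = y := by
      rw [hz, Matrix.mulVec_mulVec, Matrix.mul_nonsing_inv _ hdet, Matrix.one_mulVec]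
    rw [← Matrix.mulVec_mulVec, ← hz]
    have b := S_bound S σu hu hsym
      (fun v => (mul_nonneg hσl.le (dot_nn v)).trans (ql v)) qh (Sum.elim 0 z)
    rw [hSv, hy] at b
    simp only [sumElim_dotProduct_sumElim, zero_dotProduct, zero_add] at b
    have c := q2 z
    rw [hy] at c
    have e := dot_nn (y - σl • z)
    simp only [dotProduct_sub, sub_dotProduct, smul_dotProduct, dotProduct_smul, smul_eq_mul,
      dotProduct_comm y z] at e
    have f : σl ^ 2 * (z ⬝ᵥ z) ≤ y ⬝ᵥ y := by nlinarith
    have g : z ⬝ᵥ z ≤ (y ⬝ᵥ y) / σl ^ 2 := by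
      rw [le_div_iff₀ (by positivity)]; linarith
    have := mul_le_mul_of_nonneg_left g (sq_nonneg σu)
    have h : (σu ^ 2 / σl ^ 2 - 1) * (y ⬝ᵥ y) = σu ^ 2 * (y ⬝ᵥ y / σl ^ 2) - y ⬝ᵥ y := by ring
    rw [h]; linarith
  have hfin := l2_le _ _ (by
    rw [sub_nonneg, one_le_div (by positivity)]
    gcongr) main
  linarith
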